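/- Let A be a regular commutative Noetherian ring (i.e., the localization of A at every prime ideal is a regular local ring). Let Q be a finitely generated, cancellative, torsion-free, root closed commutative monoid, and let R = A[Q] be the monoid algebra. Let 𝔭 be a prime ideal of R, let P = {q ∈ Q : e^q ∈ 𝔭}, and let I be the ideal of the localization R_𝔭 generated by the images of the elements e^q with q ∈ P. Then the quotient R_𝔭/I is a regular local ring. -/

import Mathlib

/-- A commutative ring is a regular local ring if it is Noetherian local and its maximal ideal
can be generated by `n` elements, where `n` is its Krull dimension. -/
def IsRegularLocal (R : Type*) [CommRing R] : Prop :=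
  IsNoetherianRing R ∧ ∃ h : IsLocalRing R, ∃ (n : ℕ) (s : Finset R),
    s.card = n ∧ Ideal.span (s : Set R) = @IsLocalRing.maximalIdeal R _ h ∧
      ringKrullDim R = n

/-!
Let `F = {q | e^q ∉ 𝔭}`, a face of `Q`. Killing the `e^q` with `q ∉ F` retracts `A[Q]` onto `A[F]`,
so `R_𝔭 / I` is a localization of `A[F]` in which every `e^q` with `q ∈ F` is inverted, hence a
localization of `A[F^gp]`. The group `F^gp` is free of finite rank, so `A[F^gp]` is a Laurent
polynomial ring over `A`, that is, a localization of a polynomial ring, and regularity passes to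
polynomial rings and localizations.
-/

open MonoidAlgebra

theorem isRegularLocal_iff_isRegularLocalRing {R : Type*} [CommRing R] :
    IsRegularLocal R ↔ IsRegularLocalRing R := by
  constructor
  · rintro ⟨_, _, n, s, hcard, hspan, hdim⟩
    apply IsRegularLocalRing.of_spanFinrank_maximalIdeal_le
    rw [hdim, ← hspan, ← hcard, ← Set.ncard_coe_finset]
    exact_mod_cast Submodule.spanFinrank_span_le_ncard_of_finite s.finite_toSet
  · intro _
    have hfg : Submodule.FG (IsLocalRing.maximalIdeal R) :=
      (IsLocalRing.maximalIdeal R).fg_of_isNoetherianRing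
    have hfin := hfg.finite_generators
    refine ⟨inferInstance, inferInstance, _, hfin.toFinset, rfl, ?_, ?_⟩
    · rw [hfin.coe_toFinset]
      exact (IsLocalRing.maximalIdeal R).span_generators
    · rw [← Set.ncard_eq_toFinset_card _ hfin, hfg.generators_ncard,
        IsRegularLocalRing.spanFinrank_maximalIdeal]

/-- Regularity without the Noetherian hypothesis: every localization at a prime is a regular local
ring. A ring is `IsRegularRing` when it is moreover Noetherian. -/
def IsLocallyRegular (R : Type*) [CommRing R] : Prop :=
  ∀ (p : Ideal R) [p.IsPrime], IsRegularLocalRing (Localization.AtPrime p)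

namespace IsLocallyRegular

variable {R S T : Type*} [CommRing R] [CommRing S] [CommRing T]

theorem isRegularRing [IsNoetherianRing R] (hR : IsLocallyRegular R) : IsRegularRing R :=
  isRegularRing_iff.2 hR

theorem of_ringEquiv (e : R ≃+* S) (hR : IsLocallyRegular R) : IsLocallyRegular S := by
  intro p _
  have := hR (p.comap e)
  exact IsRegularLocalRing.of_ringEquiv <| IsLocalization.ringEquivOfRingEquiv
    (Localization.AtPrime (p.comap e)) (Localization.AtPrime p) e (e.map_primeCompl_comap_eq p)

theorem isRegularLocalRing [IsLocalRing R] (hR : IsLocallyRegular R) : IsRegularLocalRing R := by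
  have := hR (IsLocalRing.maximalIdeal R)
  have hunits (x) (hx : x ∈ (IsLocalRing.maximalIdeal R).primeCompl) : IsUnit x := by
    simpa using! hx
  exact IsRegularLocalRing.of_ringEquiv
    (IsLocalization.atUnits R (IsLocalRing.maximalIdeal R).primeCompl
      (S := Localization.AtPrime (IsLocalRing.maximalIdeal R)) hunits).toRingEquiv.symm

variable [Algebra R S] [Algebra R T]

theorem of_isLocalization (M : Submonoid R) [IsLocalization M S] (hR : IsLocallyRegular R) :
    IsLocallyRegular S := by
  intro p _
  have := IsLocalization.isLocalization_isLocalization_atPrime_isLocalization M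
    (Localization.AtPrime p) p
  have := hR (p.comap (algebraMap R S))
  exact IsRegularLocalRing.of_ringEquiv (IsLocalization.algEquiv
    (p.comap (algebraMap R S)).primeCompl
    (Localization.AtPrime (p.comap (algebraMap R S))) (Localization.AtPrime p)).toRingEquiv

theorem of_isLocalization_of_le {M N : Submonoid R} (hMN : M ≤ N) [IsLocalization M S]
    [IsLocalization N T] (hS : IsLocallyRegular S) : IsLocallyRegular T := by
  have hunits (x : M) : IsUnit (algebraMap R T x) := IsLocalization.map_units T (⟨x, hMN x.2⟩ : N)
  let : Algebra S T := (IsLocalization.lift hunits).toAlgebra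
  have : IsScalarTower R S T := .of_algebraMap_eq fun x => (IsLocalization.lift_eq hunits x).symm
  have := IsLocalization.isLocalization_of_submonoid_le S T M N hMN
  exact hS.of_isLocalization (N.map (algebraMap R S))

attribute [local instance] MvPolynomial.algebraMvPolynomial in
theorem mvPolynomial {σ : Type*} [Finite σ] (hR : IsLocallyRegular R) :
    IsLocallyRegular (MvPolynomial σ R) := by
  intro P _
  let p : Ideal R := P.comap MvPolynomial.C
  have := hR p
  have : IsRegularRing (Localization.AtPrime p) := (hR.of_isLocalization p.primeCompl).isRegularRing
  have hreg : IsLocallyRegular (MvPolynomial σ (Localization.AtPrime p)) :=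
    IsRegularRing.isRegularLocalRing_localization
  have hle : p.primeCompl.map MvPolynomial.C ≤ P.primeCompl := by
    rintro _ ⟨a, ha, rfl⟩
    exact ha
  exact (hreg.of_isLocalization_of_le (T := Localization.AtPrime P) hle).isRegularLocalRing

end IsLocallyRegular

section Localization

variable (A : Type*) [CommRing A] {M N : Type*} [CommMonoid M] [CommMonoid N] {S : Submonoid M}
  {f : M →* N}

theorem exists_mul_of_eq_mapDomain (hf : S.IsLocalizationMap f) (z : MonoidAlgebra A N) :
    ∃ s ∈ S, ∃ x : MonoidAlgebra A M, z * of A N (f s) = mapDomainRingHom A f x := by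
  induction z using MonoidAlgebra.induction_linear with
  | zero => exact ⟨1, S.one_mem, 0, by simp⟩
  | single n a =>
    obtain ⟨⟨m, s⟩, h⟩ := hf.surj n
    exact ⟨s, s.2, single m a, by simpa using congrArg (single · a) h⟩
  | add z w hz hw =>
    obtain ⟨s, hs, x, hx⟩ := hz
    obtain ⟨t, ht, y, hy⟩ := hw
    refine ⟨s * t, S.mul_mem hs ht, x * of A M t + y * of A M s, ?_⟩
    have hmap_of (m : M) : mapDomainRingHom A f (of A M m) = of A N (f m) := by simp
    rw [map_add, map_mul, map_mul, map_mul, map_mul, hmap_of, hmap_of, ← hx, ← hy]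
    ring

theorem exists_of_mul_eq_of_mapDomain_eq (hf : S.IsLocalizationMap f) {x y : MonoidAlgebra A M}
    (hxy : mapDomainRingHom A f x = mapDomainRingHom A f y) :
    ∃ s ∈ S, of A M s * x = of A M s * y := by
  let L := Localization (S.map (of A M))
  let toL : MonoidAlgebra A M →ₐ[A] L := IsScalarTower.toAlgHom A _ L
  let g : M →* L := (toL : _ →* L).comp (of A M)
  have hg (s : S) : IsUnit (g s) :=
    IsLocalization.map_units L (⟨of A M s, s, s.2, rfl⟩ : S.map (of A M))
  let F : S.LocalizationMap N := ⟨f, hf⟩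
  let ψ : MonoidAlgebra A N →ₐ[A] L := MonoidAlgebra.lift A L N (F.lift hg)
  -- The localization map of `A[M]` factors through `A[N]`, so it identifies `x` and `y`.
  have hfactor : ψ.comp (mapDomainAlgHom A A f) = toL := by
    refine MonoidAlgebra.algHom_ext (fun m => ?_) (by ext)
    simp only [AlgHom.comp_apply, mapDomainAlgHom_apply, ψ]
    rw [mapDomain_single, lift_single, one_smul]
    exact F.lift_eq hg m
  have hL : algebraMap _ L x = algebraMap _ L y := by
    calc toL x = ψ (mapDomainRingHom A f x) := (DFunLike.congr_fun hfactor x).symm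
      _ = ψ (mapDomainRingHom A f y) := congrArg ψ hxy
      _ = toL y := DFunLike.congr_fun hfactor y
  obtain ⟨⟨_, s, hs, rfl⟩, h⟩ := IsLocalization.exists_of_eq (M := S.map (of A M)) hL
  exact ⟨s, hs, h⟩

theorem isLocalization_monoidAlgebra (hf : S.IsLocalizationMap f) :
    letI := (mapDomainRingHom A f).toAlgebra
    IsLocalization (S.map (of A M)) (MonoidAlgebra A N) := by
  let := (mapDomainRingHom A f).toAlgebra
  refine ⟨⟨?_, fun z => ?_, fun {x y} hxy => ?_⟩⟩
  · rintro ⟨_, s, hs, rfl⟩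
    simpa [RingHom.algebraMap_toAlgebra] using (hf.map_units ⟨s, hs⟩).map (of A N)
  · obtain ⟨s, hs, x, hx⟩ := exists_mul_of_eq_mapDomain A hf z
    exact ⟨⟨x, of A M s, s, hs, rfl⟩, by simpa [RingHom.algebraMap_toAlgebra] using hx⟩
  · obtain ⟨s, hs, h⟩ := exists_of_mul_eq_of_mapDomain_eq A hf hxy
    exact ⟨⟨of A M s, s, hs, rfl⟩, h⟩

end Localization

theorem isLocalizationMap_multiplicative_finsupp_nat_int (σ : Type*) :
    (⊤ : Submonoid (Multiplicative (σ →₀ ℕ))).IsLocalizationMap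
      (AddMonoidHom.toMultiplicative
        (Finsupp.mapRange.addMonoidHom (ι := σ) (Nat.castAddMonoidHom ℤ))) := by
  refine Submonoid.isLocalizationMap_of_group (fun x y hxy => ?_) fun z => ?_
  · exact Finsupp.mapRange_injective _ Nat.cast_zero Nat.cast_injective hxy
  · refine ⟨.ofAdd (z.toAdd.mapRange Int.toNat rfl),
      .ofAdd ((-z.toAdd).mapRange Int.toNat rfl), trivial, ?_⟩
    refine Multiplicative.toAdd.injective (Finsupp.ext fun i => ?_)
    simp

theorem exists_isLocalizationMap_multiplicative_finsupp_nat (G : Type*) [CommGroup G]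
    [Monoid.FG G] [IsMulTorsionFree G] :
    ∃ (n : ℕ) (f : Multiplicative (Fin n →₀ ℕ) →* G),
      (⊤ : Submonoid (Multiplicative (Fin n →₀ ℕ))).IsLocalizationMap f := by
  have : Group.FG G := Group.fg_iff_monoid_fg.2 inferInstance
  have : Module.Finite ℤ (Additive G) := Module.Finite.iff_addGroup_fg.2 inferInstance
  let e : Multiplicative (Fin (Module.finrank ℤ (Additive G)) →₀ ℤ) ≃* G :=
    (AddEquiv.toMultiplicativeRight (Module.finBasis ℤ (Additive G)).repr.toAddEquiv).symm
  exact ⟨_, e.toMonoidHom.comp _,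
    (isLocalizationMap_multiplicative_finsupp_nat_int _).mulEquiv_comp e⟩

namespace IsLocallyRegular

variable {A : Type*} [CommRing A]

theorem monoidAlgebra_of_commGroup (hA : IsLocallyRegular A) (G : Type*) [CommGroup G]
    [Monoid.FG G] [IsMulTorsionFree G] : IsLocallyRegular (MonoidAlgebra A G) := by
  obtain ⟨n, f, hf⟩ := exists_isLocalizationMap_multiplicative_finsupp_nat G
  have hpoly : IsLocallyRegular (MonoidAlgebra A (Multiplicative (Fin n →₀ ℕ))) :=
    (hA.mvPolynomial (σ := Fin n)).of_ringEquiv (AddMonoidAlgebra.toMultiplicative A _)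
  let := (mapDomainRingHom A f).toAlgebra
  have := isLocalization_monoidAlgebra A hf
  exact hpoly.of_isLocalization (Submonoid.map (of A (Multiplicative (Fin n →₀ ℕ))) ⊤)

theorem of_isLocalization_monoidAlgebra (hA : IsLocallyRegular A) {M : Type*} [CommMonoid M]
    [Monoid.FG M] [IsMulTorsionFree M] {T : Type*} [CommRing T] [Algebra (MonoidAlgebra A M) T]
    {N : Submonoid (MonoidAlgebra A M)} [IsLocalization N T] (hN : ∀ m, of A M m ∈ N) :
    IsLocallyRegular T := by
  let : Algebra (MonoidAlgebra A M) (MonoidAlgebra A (Algebra.GrothendieckGroup M)) :=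
    (mapDomainRingHom A Algebra.GrothendieckGroup.of).toAlgebra
  have : IsLocalization (Submonoid.map (of A M) ⊤)
      (MonoidAlgebra A (Algebra.GrothendieckGroup M)) :=
    isLocalization_monoidAlgebra A (Localization.monoidOf ⊤).isLocalizationMap
  have hle : Submonoid.map (of A M) ⊤ ≤ N := by
    rintro _ ⟨m, -, rfl⟩
    exact hN m
  exact (hA.monoidAlgebra_of_commGroup (Algebra.GrothendieckGroup M)).of_isLocalization_of_le hle

end IsLocallyRegular

section Face

variable {Q : Type*} [CommMonoid Q] {F : Submonoid Q}

theorem fg_of_mulSaturated [Monoid.FG Q] (hF : F.MulSaturated) : Monoid.FG F := by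
  obtain ⟨s, hs⟩ := Monoid.FG.fg_top (M := Q)
  have hspan : Submonoid.closure (s ∩ F : Set Q) = F := by
    refine le_antisymm (Submonoid.closure_le.2 Set.inter_subset_right) fun x hx => ?_
    have hx_top : x ∈ Submonoid.closure (s : Set Q) := hs ▸ Submonoid.mem_top x
    induction hx_top using Submonoid.closure_induction with
    | mem y hy => exact Submonoid.subset_closure ⟨hy, hx⟩
    | one => exact one_mem _
    | mul y z _ _ ihy ihz => exact mul_mem (ihy (hF hx).1) (ihz (hF hx).2)
  exact (Monoid.fg_iff_submonoid_fg F).2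
    ((Submonoid.fg_iff F).2 ⟨_, hspan, s.finite_toSet.inter_of_left F⟩)

variable (A : Type*) [CommRing A]

open Classical in
/-- The retraction `A[Q] → A[F]` of `A`-algebras attached to a face `F` (a multiplicatively
saturated submonoid) of `Q`: it fixes `e^q` for `q ∈ F` and kills it for `q ∉ F`. -/
noncomputable def faceRetraction (hF : F.MulSaturated) :
    MonoidAlgebra A Q →ₐ[A] MonoidAlgebra A F :=
  MonoidAlgebra.lift A _ Q
    { toFun q := if hq : q ∈ F then of A F ⟨q, hq⟩ else 0
      map_one' := dif_pos F.one_mem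
      map_mul' x y := by
        by_cases hxy : x * y ∈ F
        · simp [hxy, (hF hxy).1, (hF hxy).2]
        · rcases not_and_or.1 (mt (fun h => F.mul_mem h.1 h.2) hxy) with hx | hy
          · simp [hxy, hx]
          · simp [hxy, hy] }

variable {A} (hF : F.MulSaturated)

theorem faceRetraction_single_of_mem {q : Q} (hq : q ∈ F) (a : A) :
    faceRetraction A hF (single q a) = single ⟨q, hq⟩ a := by
  simp [faceRetraction, hq]

theorem faceRetraction_single_of_notMem {q : Q} (hq : q ∉ F) (a : A) :
    faceRetraction A hF (single q a) = 0 := by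
  simp [faceRetraction, hq]

theorem faceRetraction_surjective : Function.Surjective (faceRetraction A hF) := by
  intro x
  induction x using MonoidAlgebra.induction_linear with
  | zero => exact ⟨0, map_zero _⟩
  | single q a => exact ⟨single q a, faceRetraction_single_of_mem hF q.2 a⟩
  | add x y hx hy =>
    obtain ⟨x, rfl⟩ := hx
    obtain ⟨y, rfl⟩ := hy
    exact ⟨x + y, map_add _ x y⟩

theorem ker_faceRetraction :
    RingHom.ker (faceRetraction A hF) = Ideal.span (of A Q '' (F : Set Q)ᶜ) := by
  set J : Ideal (MonoidAlgebra A Q) := Ideal.span (of A Q '' (F : Set Q)ᶜ)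
  let ι : MonoidAlgebra A F →ₐ[A] MonoidAlgebra A Q := mapDomainAlgHom A A F.subtype
  have hsub_mem (x : MonoidAlgebra A Q) : x - ι (faceRetraction A hF x) ∈ J := by
    induction x using MonoidAlgebra.induction_linear with
    | zero => simp
    | add x y hx hy =>
      rw [map_add, map_add, add_sub_add_comm]
      exact J.add_mem hx hy
    | single q a =>
      by_cases hq : q ∈ F
      · simp [faceRetraction_single_of_mem hF hq, ι]
      · have hmem : of A Q q ∈ J := Ideal.subset_span ⟨q, hq, rfl⟩
        simpa [faceRetraction_single_of_notMem hF hq] using J.mul_mem_left (single 1 a) hmem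
  refine le_antisymm (fun x hx => ?_) (Ideal.span_le.2 ?_)
  · simpa [RingHom.mem_ker.1 hx] using hsub_mem x
  · rintro _ ⟨q, hq, rfl⟩
    exact faceRetraction_single_of_notMem hF hq 1

end Face

theorem exists_algebra_isLocalization_map_quotient {R R' : Type*} [CommRing R] [CommRing R']
    (S : Type*) [CommRing S] [Algebra R S] (M : Submonoid R) [IsLocalization M S] {f : R →+* R'}
    (hf : Function.Surjective f) {J : Ideal R} (hJ : RingHom.ker f = J) :
    ∃ _ : Algebra R' (S ⧸ J.map (algebraMap R S)),
      IsLocalization (M.map f) (S ⧸ J.map (algebraMap R S)) := by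
  subst hJ
  let g := Ideal.Quotient.mk ((RingHom.ker f).map (algebraMap R S))
  have hker : RingHom.ker f ≤ RingHom.ker (g.comp (algebraMap R S)) := fun x hx =>
    Ideal.Quotient.eq_zero_iff_mem.2 (Ideal.mem_map_of_mem _ hx)
  let : Algebra R' (S ⧸ (RingHom.ker f).map (algebraMap R S)) :=
    (f.liftOfSurjective hf ⟨_, hker⟩).toAlgebra
  exact ⟨this, IsLocalization.of_surjective M S f hf g Ideal.Quotient.mk_surjective
    (f.liftOfSurjective_comp hf ⟨_, hker⟩).symm Ideal.mk_ker.le⟩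

theorem mulSaturated_comap_primeCompl {M R : Type*} [Monoid M] [CommSemiring R] (p : Ideal R)
    [p.IsPrime] (f : M →* R) : (p.primeCompl.comap f).MulSaturated := by
  intro x y hxy
  have hxy : f x * f y ∉ p := fun h => hxy (by simpa using h)
  exact ⟨fun hx => hxy (p.mul_mem_right _ hx), fun hy => hxy (p.mul_mem_left _ hy)⟩

theorem isLocalRing_localization_atPrime_quotient_map {R : Type*} [CommRing R] {p J : Ideal R}
    [p.IsPrime] (hJ : J ≤ p) :
    IsLocalRing (Localization.AtPrime p ⧸ J.map (algebraMap R (Localization.AtPrime p))) := by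
  have hle : J.map (algebraMap R (Localization.AtPrime p)) ≤
      IsLocalRing.maximalIdeal (Localization.AtPrime p) :=
    (Ideal.map_mono hJ).trans (Localization.AtPrime.map_eq_maximalIdeal).le
  have := Ideal.Quotient.nontrivial_iff.2
    (ne_top_of_le_ne_top (IsLocalRing.maximalIdeal.isMaximal _).ne_top hle)
  exact IsLocalRing.of_surjective' _ Ideal.Quotient.mk_surjective

theorem monoidAlgebra_localization_quotient_regular_general (A : Type*) [CommRing A]
    (hreg : ∀ (p : Ideal A) [p.IsPrime], IsRegularLocal (Localization.AtPrime p))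
    (Q : Type*) [CommMonoid Q] [Monoid.FG Q] [IsMulTorsionFree Q]
    (𝔭 : Ideal (MonoidAlgebra A Q)) [𝔭.IsPrime] :
    IsRegularLocal (Localization.AtPrime 𝔭 ⧸ Ideal.span
      (algebraMap (MonoidAlgebra A Q) (Localization.AtPrime 𝔭) ''
        ((fun q => MonoidAlgebra.of A Q q) '' {q : Q | MonoidAlgebra.of A Q q ∈ 𝔭}))) := by
  have hA : IsLocallyRegular A := fun p _ => isRegularLocal_iff_isRegularLocalRing.1 (hreg p)
  let F : Submonoid Q := 𝔭.primeCompl.comap (of A Q)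
  have hF : F.MulSaturated := mulSaturated_comap_primeCompl 𝔭 _
  have : Monoid.FG F := fg_of_mulSaturated hF
  have : IsMulTorsionFree F :=
    Function.Injective.isMulTorsionFree F.subtype Subtype.val_injective
  have hker : RingHom.ker (faceRetraction A hF) = Ideal.span (of A Q '' {q | of A Q q ∈ 𝔭}) := by
    rw [ker_faceRetraction]
    congr! 2
    ext q
    simp [F, Ideal.primeCompl]
  have hle : Ideal.span (of A Q '' {q | of A Q q ∈ 𝔭}) ≤ 𝔭 :=
    Ideal.span_le.2 (Set.image_preimage_subset _ _)
  rw [isRegularLocal_iff_isRegularLocalRing, ← Ideal.map_span]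
  obtain ⟨_, _⟩ := exists_algebra_isLocalization_map_quotient (Localization.AtPrime 𝔭)
    𝔭.primeCompl (f := (faceRetraction A hF).toRingHom) (faceRetraction_surjective hF) hker
  have := isLocalRing_localization_atPrime_quotient_map hle
  exact IsLocallyRegular.isRegularLocalRing <| hA.of_isLocalization_monoidAlgebra
    (N := 𝔭.primeCompl.map (faceRetraction A hF).toRingHom)
    fun q => ⟨of A Q q, q.2, faceRetraction_single_of_mem hF q.2 1⟩

/-- Let `A` be a regular commutative Noetherian ring, `Q` a finitely generated, cancellative,
torsion-free, root closed commutative monoid, and `R = A[Q]` the monoid algebra. Let `𝔭` be a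
prime ideal of `R`, `P = {q : e^q ∈ 𝔭}`, and `I` the ideal of `R_𝔭` generated by the images of
the `e^q` with `q ∈ P`. Then `R_𝔭 / I` is a regular local ring. -/
theorem monoidAlgebra_localization_quotient_regular (A : Type*) [CommRing A]
    [IsNoetherianRing A]
    (hreg : ∀ (p : Ideal A) [p.IsPrime], IsRegularLocal (Localization.AtPrime p))
    (Q : Type*) [CommMonoid Q] [IsCancelMul Q] (hfg : Monoid.FG Q)
    (htf : ∀ (n : ℕ), 0 < n → ∀ x y : Q, x ^ n = y ^ n → x = y)
    (hrc : ∀ (a b : Q) (n : ℕ), 0 < n → (∃ q : Q, a ^ n = b ^ n * q) → ∃ q' : Q, a = b * q')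
    (𝔭 : Ideal (MonoidAlgebra A Q)) [𝔭.IsPrime]
    (I : Ideal (Localization.AtPrime 𝔭))
    (hI : I = Ideal.span (algebraMap (MonoidAlgebra A Q) (Localization.AtPrime 𝔭) ''
        ((fun q => MonoidAlgebra.of A Q q) '' {q : Q | MonoidAlgebra.of A Q q ∈ 𝔭}))) :
    IsRegularLocal (Localization.AtPrime 𝔭 ⧸ I) := by
  have : IsMulTorsionFree Q := ⟨fun n hn x y => htf n (Nat.pos_of_ne_zero hn) x y⟩
  exact hI ▸ monoidAlgebra_localization_quotient_regular_general A hreg Q 𝔭
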